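/- There exists N such that for every integer n ≥ N, n²/6 − 5n/(2√3) + 3 < H(n) ≤ C(n,2). In particular, H(n) = Θ(C(n+1,3) − C(n,3)) = Θ(n²). -/

import Mathlib

open Finset Matrix

/-- The sign `[T : e]` of an edge `e` in a triangle `T`. -/
noncomputable def triSign (T e : Finset ℕ) : ℝ :=
  if e ⊆ T ∧ e.card = 2 ∧ T.card = 3 then
    if (T \ e).max = T.max ∨ (T \ e).min = T.min then 1 else -1
  else 0

/-- A triangle family: a nonempty finite set of 3-element subsets of ℕ. -/
def IsTriFam (F : Finset (Finset ℕ)) : Prop :=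
  F.Nonempty ∧ ∀ T ∈ F, T.card = 3

/-- The edges of the support graph of a triangle family. -/
def edgesOf (F : Finset (Finset ℕ)) : Finset (Finset ℕ) :=
  F.biUnion fun T => T.powersetCard 2

/-- The vertices of the support graph of a triangle family. -/
def vertsOf (F : Finset (Finset ℕ)) : Finset ℕ :=
  F.biUnion id

/-- The signed edge-triangle incidence matrix of a triangle family. -/
noncomputable def delta1 (F : Finset (Finset ℕ)) :
    Matrix {T // T ∈ F} {e // e ∈ edgesOf F} ℝ :=
  Matrix.of fun T e => triSign T.1 e.1

/-- The smallest positive eigenvalue of a matrix. -/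
noncomputable def lambdaMinPos {m : Type*} [Fintype m] (M : Matrix m m ℝ) : ℝ :=
  sInf {μ : ℝ | 0 < μ ∧ ∃ v : m → ℝ, v ≠ 0 ∧ M.mulVec v = μ • v}

/-- `λ(𝒯)`: the smallest positive eigenvalue of `δ₁(𝒯)ᵀ δ₁(𝒯)`. -/
noncomputable def lam (F : Finset (Finset ℕ)) : ℝ :=
  lambdaMinPos ((delta1 F)ᵀ * delta1 F)

/-- The neighborhood of `x` in the support graph `Γ₀(F)`. -/
def nbrs (F : Finset (Finset ℕ)) (x : ℕ) : Finset ℕ :=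
  (vertsOf F).filter fun y => x ≠ y ∧ ∃ T ∈ F, x ∈ T ∧ y ∈ T

/-- `φ(t)`: the maximum of `λ(𝒯)` over triangle families with `|𝒯| = t`. -/
noncomputable def phi (t : ℕ) : ℝ :=
  sSup {r : ℝ | ∃ F : Finset (Finset ℕ), IsTriFam F ∧ F.card = t ∧ lam F = r}

/-- `Λ(t) = max_{1 ≤ s ≤ t} φ(s)`. -/
noncomputable def Lam (t : ℕ) : ℝ :=
  sSup {r : ℝ | ∃ s : ℕ, 1 ≤ s ∧ s ≤ t ∧ phi s = r}

/-- `H(n) = min{ s ≥ 1 : φ(C(n,3)+s) > n - 1 }`. -/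
noncomputable def Hfun (n : ℕ) : ℕ :=
  sInf {s : ℕ | 1 ≤ s ∧ (n : ℝ) - 1 < phi (n.choose 3 + s)}

/-- The triangle family `𝒯_{c,b}`: all 3-cliques of `K_c ∨ (b isolated vertices)`. -/
def Tcb (c b : ℕ) : Finset (Finset ℕ) :=
  ((Finset.Icc 1 c).powersetCard 3) ∪
    (Finset.Icc (c+1) (c+b)).biUnion
      (fun i => ((Finset.Icc 1 c).powersetCard 2).image (fun p => insert i p))

/-! For a positive semidefinite matrix `M` with smallest positive eigenvalue `λ`, the matrix
`M ^ 2 - λ M` is positive semidefinite. For `M = δ₁ᵀ δ₁` its diagonal entry at an edge lying in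
`d ≥ 1` triangles is `d (d + 2) - λ d`, so `λ ≤ d + 2`. Hence if a family `F` has `λ > n - 1`, every
edge lies in at least `n - 2` triangles and every vertex lies on at least `n - 1` edges; if moreover
`#F > C(n, 3)`, then there are at least `n + 1` vertices, and counting incidences gives
`(n + 1) (n - 1) (n - 2) ≤ 6 #F`, that is, `#F - C(n, 3) ≥ (n - 1) (n - 2) / 6`.

Conversely, the complete family on `n + 1` vertices has `C(n, 3) + C(n, 2)` triangles. Viewing
functions on edges as alternating functions on ordered pairs, its `M` sums the coboundary over all
third vertices; since coboundaries are cocycles, `M ^ 2 = (n + 1) M`, so `λ = n + 1`. -/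

section SmallestPositiveEigenvalue

variable {m : Type*} [Fintype m] {M : Matrix m m ℝ}

theorem lambdaMinPos_le_of_mulVec_eq_smul {μ : ℝ} (hμ : 0 < μ) {v : m → ℝ} (hv : v ≠ 0)
    (h : M *ᵥ v = μ • v) : lambdaMinPos M ≤ μ :=
  csInf_le ⟨0, fun _ hx => hx.1.le⟩ ⟨hμ, v, hv, h⟩

theorem lambdaMinPos_le_eigenvalues [DecidableEq m] (hM : M.IsHermitian) {i : m}
    (hi : 0 < hM.eigenvalues i) : lambdaMinPos M ≤ hM.eigenvalues i := by
  refine lambdaMinPos_le_of_mulVec_eq_smul hi (fun h => ?_) (hM.mulVec_eigenvectorBasis i)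
  exact hM.eigenvectorBasis.orthonormal.ne_zero i (PiLp.ext (congrFun h))

theorem posSemidef_mul_self_sub_lambdaMinPos_smul (hM : M.PosSemidef) :
    (M * M - lambdaMinPos M • M).PosSemidef := by
  classical
  set d := hM.isHermitian.eigenvalues
  set U := hM.isHermitian.eigenvectorUnitary
  have hdiag : diagonal d * diagonal d - lambdaMinPos M • diagonal d =
      diagonal fun i => d i * (d i - lambdaMinPos M) := by
    rw [diagonal_mul_diagonal, ← diagonal_smul, diagonal_sub]
    congr 1 with i
    simp only [Pi.smul_apply, smul_eq_mul]
    ring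
  have hspec : M = Unitary.conjStarAlgAut ℝ _ U (diagonal d) := hM.isHermitian.spectral_theorem
  have hconj : M * M - lambdaMinPos M • M =
      Unitary.conjStarAlgAut ℝ _ U (diagonal fun i => d i * (d i - lambdaMinPos M)) := by
    rw [← hdiag, map_sub, map_mul, map_smul, ← hspec]
  rw [hconj, Unitary.conjStarAlgAut_apply]
  refine (PosSemidef.diagonal fun i => ?_).mul_mul_conjTranspose_same _
  rcases (hM.eigenvalues_nonneg i).eq_or_lt with hi | hi
  · simp [d, ← hi]
  · exact mul_nonneg hi.le (sub_nonneg.2 (lambdaMinPos_le_eigenvalues _ hi))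

theorem lambdaMinPos_eq_of_mul_self_eq_smul {c : ℝ} (hc : 0 < c) (hM : M ≠ 0)
    (h : M * M = c • M) : lambdaMinPos M = c := by
  classical
  have hset : {μ : ℝ | 0 < μ ∧ ∃ v : m → ℝ, v ≠ 0 ∧ M *ᵥ v = μ • v} = {c} := by
    refine Set.eq_singleton_iff_unique_mem.2 ⟨⟨hc, ?_⟩, ?_⟩
    · obtain ⟨j, hj⟩ : ∃ j, M.col j ≠ 0 := by
        by_contra! h0
        exact hM (ext_col h0)
      refine ⟨M.col j, hj, ?_⟩
      rw [← mulVec_single_one, mulVec_mulVec, h, smul_mulVec]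
    · rintro μ ⟨hμ, v, hv, hMv⟩
      have hsq : (μ * μ) • v = (c * μ) • v := by
        rw [mul_smul, mul_smul, ← hMv, ← mulVec_smul, ← hMv, mulVec_mulVec, h, smul_mulVec]
      exact mul_right_cancel₀ hμ.ne' (smul_left_injective ℝ hv hsq)
  rw [lambdaMinPos, hset, csInf_singleton]

end SmallestPositiveEigenvalue

section SupportGraph

variable {F : Finset (Finset ℕ)} {T e : Finset ℕ} {v w k : ℕ}

theorem mem_edgesOf : e ∈ edgesOf F ↔ ∃ T ∈ F, e ⊆ T ∧ #e = 2 := by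
  simp only [edgesOf, mem_biUnion, mem_powersetCard]

theorem mem_vertsOf : v ∈ vertsOf F ↔ ∃ T ∈ F, v ∈ T := by
  simp only [vertsOf, mem_biUnion, id]

theorem card_eq_two_of_mem_edgesOf (he : e ∈ edgesOf F) : #e = 2 := by
  obtain ⟨_, _, _, he⟩ := mem_edgesOf.1 he
  exact he

theorem IsTriFam.edgesOf_nonempty (hF : IsTriFam F) : (edgesOf F).Nonempty := by
  obtain ⟨T, hT⟩ := hF.1
  obtain ⟨e, heT, he⟩ := exists_subset_card_eq (show 2 ≤ #T by rw [hF.2 T hT]; norm_num)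
  exact ⟨e, mem_edgesOf.2 ⟨T, hT, heT, he⟩⟩

theorem IsTriFam.card_le_choose_card_vertsOf (hF : IsTriFam F) :
    #F ≤ (#(vertsOf F)).choose 3 := by
  rw [← card_powersetCard]
  refine card_le_card fun T hT => mem_powersetCard.2 ⟨fun v hv => ?_, hF.2 T hT⟩
  exact mem_vertsOf.2 ⟨T, hT, hv⟩

/-- The codegree of `e` in the triangle family `F`: the number of triangles containing `e`. -/
def codeg (F : Finset (Finset ℕ)) (e : Finset ℕ) : ℕ :=
  #{T ∈ F | e ⊆ T}

theorem codeg_pos (he : e ∈ edgesOf F) : 0 < codeg F e := by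
  obtain ⟨T, hT, heT, _⟩ := mem_edgesOf.1 he
  exact card_pos.2 ⟨T, mem_filter.2 ⟨hT, heT⟩⟩

theorem IsTriFam.card_edgesOf_mul_le (hF : IsTriFam F) (hk : ∀ e ∈ edgesOf F, k ≤ codeg F e) :
    #(edgesOf F) * k ≤ #F * 3 := by
  refine card_nsmul_le_card_nsmul (fun e T : Finset ℕ => e ⊆ T) hk fun T hT => ?_
  calc #{e ∈ edgesOf F | e ⊆ T} ≤ #(T.powersetCard 2) := card_le_card fun e he =>
        mem_powersetCard.2 ⟨(mem_filter.1 he).2, card_eq_two_of_mem_edgesOf (mem_filter.1 he).1⟩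
    _ = 3 := by rw [card_powersetCard, hF.2 T hT]; rfl

theorem card_vertsOf_mul_le (hk : ∀ v ∈ vertsOf F, k ≤ #{e ∈ edgesOf F | v ∈ e}) :
    #(vertsOf F) * k ≤ #(edgesOf F) * 2 := by
  refine card_nsmul_le_card_nsmul (fun v e => v ∈ e) hk fun e he => ?_
  calc #{v ∈ vertsOf F | v ∈ e} ≤ #e := card_le_card fun v hv => (mem_filter.1 hv).2
    _ = 2 := card_eq_two_of_mem_edgesOf he

-- Besides `{v, w}` itself, each triangle `T ∋ v, w` contributes the edge `T \ {w}` through `v`.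
theorem IsTriFam.codeg_pair_lt_card_filter_mem (hF : IsTriFam F) (hvw : v ≠ w)
    (he : {v, w} ∈ edgesOf F) : codeg F {v, w} < #{e ∈ edgesOf F | v ∈ e} := by
  set star : Finset (Finset ℕ) := {T ∈ F | {v, w} ⊆ T}
  have hstar {T} (hT : T ∈ star) : T ∈ F ∧ v ∈ T ∧ w ∈ T := by
    simpa only [star, mem_filter, insert_subset_iff, singleton_subset_iff] using hT
  have hinj : Set.InjOn (fun T : Finset ℕ => T.erase w) star :=
    (erase_injOn' w).mono fun T hT => (hstar hT).2.2
  have hnotMem : {v, w} ∉ star.image fun T => T.erase w := by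
    simp only [mem_image, not_exists, not_and]
    intro T _ h
    have hw : w ∈ T.erase w := by simp [h]
    exact notMem_erase w T hw
  rw [codeg, Nat.lt_iff_add_one_le, ← card_image_of_injOn hinj, ← card_insert_of_notMem hnotMem]
  refine card_le_card (insert_subset (mem_filter.2 ⟨he, by simp⟩) ?_)
  intro e he
  obtain ⟨T, hT, rfl⟩ := mem_image.1 he
  obtain ⟨hTF, hvT, hwT⟩ := hstar hT
  refine mem_filter.2 ⟨mem_edgesOf.2 ⟨T, hTF, erase_subset _ _, ?_⟩, mem_erase.2 ⟨hvw, hvT⟩⟩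
  rw [card_erase_of_mem hwT, hF.2 T hTF]

theorem IsTriFam.succ_le_card_filter_mem (hF : IsTriFam F)
    (hk : ∀ e ∈ edgesOf F, k ≤ codeg F e) (hv : v ∈ vertsOf F) :
    k + 1 ≤ #{e ∈ edgesOf F | v ∈ e} := by
  obtain ⟨T, hT, hvT⟩ := mem_vertsOf.1 hv
  obtain ⟨w, hwT, hwv⟩ := exists_mem_ne (show 1 < #T by rw [hF.2 T hT]; norm_num) v
  have he : {v, w} ∈ edgesOf F :=
    mem_edgesOf.2 ⟨T, hT, by simp [insert_subset_iff, hvT, hwT], card_pair hwv.symm⟩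
  exact (hk _ he).trans_lt (hF.codeg_pair_lt_card_filter_mem hwv.symm he)

theorem IsTriFam.card_vertsOf_mul_mul_le (hF : IsTriFam F)
    (hk : ∀ e ∈ edgesOf F, k ≤ codeg F e) : #(vertsOf F) * (k + 1) * k ≤ 6 * #F :=
  calc #(vertsOf F) * (k + 1) * k
      ≤ #(edgesOf F) * 2 * k := by
        gcongr ?_ * k
        exact card_vertsOf_mul_le fun v hv => hF.succ_le_card_filter_mem hk hv
    _ = 2 * (#(edgesOf F) * k) := by ring
    _ ≤ 2 * (#F * 3) := by gcongr 2 * ?_; exact hF.card_edgesOf_mul_le hk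
    _ = 6 * #F := by ring

theorem IsTriFam.six_mul_choose_three_add_le (hF : IsTriFam F)
    (hk : ∀ e ∈ edgesOf F, k ≤ codeg F e) (hcard : (k + 2).choose 3 < #F) :
    6 * (k + 2).choose 3 + (k + 1) * k ≤ 6 * #F := by
  have hverts : k + 3 ≤ #(vertsOf F) := by
    by_contra! h
    have := Nat.choose_le_choose 3 (show #(vertsOf F) ≤ k + 2 by lia)
    exact absurd hF.card_le_choose_card_vertsOf (by lia)
  have hchoose : 6 * (k + 2).choose 3 = (k + 2) * (k + 1) * k := by
    have h := Nat.descFactorial_eq_factorial_mul_choose (k + 2) 3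
    simp only [Nat.descFactorial, Nat.factorial] at h
    grind
  calc 6 * (k + 2).choose 3 + (k + 1) * k = (k + 3) * (k + 1) * k := by rw [hchoose]; ring
    _ ≤ #(vertsOf F) * (k + 1) * k := by gcongr
    _ ≤ 6 * #F := hF.card_vertsOf_mul_mul_le hk

end SupportGraph

section UpLaplacian

variable {F : Finset (Finset ℕ)} {T T' e : Finset ℕ}

theorem triSign_eq_zero (h : ¬ (e ⊆ T ∧ #e = 2)) : triSign T e = 0 :=
  if_neg fun h' => h ⟨h'.1, h'.2.1⟩

theorem triSign_mul_self (heT : e ⊆ T) (he : #e = 2) (hT : #T = 3) :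
    triSign T e * triSign T e = 1 := by
  rw [triSign, if_pos ⟨heT, he, hT⟩]
  split_ifs <;> norm_num

/-- The up-Laplacian `δ₁ᵀ δ₁` of the triangle family `F`, acting on functions on all finite sets
rather than only on the edges of `F`; on edges it agrees with the matrix `δ₁ᵀ δ₁`. -/
noncomputable def upLaplacian (F : Finset (Finset ℕ)) (w : Finset ℕ → ℝ) (e : Finset ℕ) : ℝ :=
  ∑ T ∈ F, triSign T e * ∑ e' ∈ T.powersetCard 2, triSign T e' * w e'

theorem delta1_mulVec (w : Finset ℕ → ℝ) (T : {T // T ∈ F}) :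
    (delta1 F *ᵥ fun e => w e.1) T = ∑ e ∈ T.1.powersetCard 2, triSign T e * w e := by
  calc (delta1 F *ᵥ fun e => w e.1) T = ∑ e ∈ edgesOf F, triSign T e * w e :=
        sum_coe_sort (edgesOf F) fun e => triSign T e * w e
    _ = ∑ e ∈ T.1.powersetCard 2, triSign T e * w e := by
        have hsub : T.1.powersetCard 2 ⊆ edgesOf F := subset_biUnion_of_mem (powersetCard 2) T.2
        refine (sum_subset hsub fun e _ he => ?_).symm
        rw [triSign_eq_zero (mt mem_powersetCard.2 he), zero_mul]

theorem gram_delta1_mulVec (w : Finset ℕ → ℝ) :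
    ((delta1 F)ᵀ * delta1 F) *ᵥ (fun e => w e.1) = fun e => upLaplacian F w e.1 := by
  ext e
  rw [← mulVec_mulVec, mulVec, dotProduct]
  simp only [delta1_mulVec]
  exact sum_coe_sort F fun T => triSign T e * ∑ e' ∈ T.powersetCard 2, triSign T e' * w e'

theorem gram_delta1_apply (e e' : {e // e ∈ edgesOf F}) :
    ((delta1 F)ᵀ * delta1 F) e e' = ∑ T ∈ F, triSign T e * triSign T e' :=
  sum_coe_sort F fun T => triSign T e * triSign T e'

theorem posSemidef_gram_delta1 (F : Finset (Finset ℕ)) :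
    ((delta1 F)ᵀ * delta1 F).PosSemidef :=
  posSemidef_conjTranspose_mul_self (delta1 F)

theorem IsTriFam.gram_delta1_apply_self (hF : IsTriFam F) (e : {e // e ∈ edgesOf F}) :
    ((delta1 F)ᵀ * delta1 F) e e = codeg F e := by
  rw [gram_delta1_apply, codeg, card_filter, Nat.cast_sum]
  refine sum_congr rfl fun T hT => ?_
  by_cases heT : e.1 ⊆ T
  · simp [heT, triSign_mul_self heT (card_eq_two_of_mem_edgesOf e.2) (hF.2 T hT)]
  · simp [heT, triSign_eq_zero]

theorem sum_triSign_mul_triSign_self (hT : #T = 3) :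
    ∑ e ∈ T.powersetCard 2, triSign T e * triSign T e = 3 := by
  rw [sum_congr rfl fun e he => triSign_mul_self (mem_powersetCard.1 he).1
    (mem_powersetCard.1 he).2 hT, sum_const, card_powersetCard, hT]
  norm_num

theorem sum_triSign_mul_triSign_of_ne (hT : #T = 3) (hT' : #T' = 3) (hne : T ≠ T')
    (he : #e = 2) (heT : e ⊆ T) (heT' : e ⊆ T') :
    ∑ e' ∈ T.powersetCard 2, triSign T e' * triSign T' e' = triSign T e * triSign T' e := by
  have hlt : #(T ∩ T') < 3 := hT ▸ card_lt_card (inf_lt_left.2 fun h =>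
    hne (eq_of_subset_of_card_le h (by lia)))
  have hinter {f} (hfT : f ⊆ T) (hfT' : f ⊆ T') (hf : #f = 2) : f = T ∩ T' :=
    eq_of_subset_of_card_le (subset_inter hfT hfT') (by lia)
  refine sum_eq_single_of_mem e (mem_powersetCard.2 ⟨heT, he⟩) fun f hf hfe => ?_
  obtain ⟨hfT, hf⟩ := mem_powersetCard.1 hf
  have hfT' : ¬ f ⊆ T' := fun h => hfe ((hinter hfT h hf).trans (hinter heT heT' he).symm)
  rw [triSign_eq_zero fun h => hfT' h.1, mul_zero]

theorem triSign_mul_sum_mul_triSign (hT : #T = 3) (hT' : #T' = 3) (he : #e = 2)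
    (heT : e ⊆ T) (heT' : e ⊆ T') :
    triSign T e * (∑ e' ∈ T.powersetCard 2, triSign T e' * triSign T' e') * triSign T' e =
      1 + if T = T' then 2 else 0 := by
  have hsq := triSign_mul_self heT he hT
  split_ifs with h
  · subst h
    rw [sum_triSign_mul_triSign_self hT]
    linear_combination 3 * hsq
  · rw [sum_triSign_mul_triSign_of_ne hT hT' h he heT heT']
    linear_combination triSign T' e * triSign T' e * hsq + triSign_mul_self heT' he hT'

theorem IsTriFam.sum_triSign_mul_sum_mul_triSign (hF : IsTriFam F) (hT : T ∈ F) (he : #e = 2)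
    (heT : e ⊆ T) :
    ∑ T' ∈ F, triSign T e * (∑ e' ∈ T.powersetCard 2, triSign T e' * triSign T' e') *
      triSign T' e = codeg F e + 2 := by
  calc _ = ∑ T' ∈ F with e ⊆ T', triSign T e *
          (∑ e' ∈ T.powersetCard 2, triSign T e' * triSign T' e') * triSign T' e :=
        (sum_filter_of_ne fun T' _ h => by_contra fun heT' =>
          h (by rw [triSign_eq_zero fun h => heT' h.1, mul_zero])).symm
    _ = ∑ T' ∈ F with e ⊆ T', (1 + if T = T' then 2 else 0) := by
        refine sum_congr rfl fun T' hT' => ?_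
        obtain ⟨hT'F, heT'⟩ := mem_filter.1 hT'
        exact triSign_mul_sum_mul_triSign (hF.2 T hT) (hF.2 T' hT'F) he heT heT'
    _ = codeg F e + 2 := by
        rw [sum_add_distrib, sum_const, sum_ite_eq, if_pos (mem_filter.2 ⟨hT, heT⟩), codeg,
          nsmul_one]

theorem IsTriFam.gram_delta1_mul_self_apply_self (hF : IsTriFam F) (e : {e // e ∈ edgesOf F}) :
    ((delta1 F)ᵀ * delta1 F * ((delta1 F)ᵀ * delta1 F)) e e =
      codeg F e * (codeg F e + 2) := by
  set f : Finset ℕ → ℝ := fun e' => ∑ T ∈ F, triSign T e' * triSign T e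
  have hcol : (fun e' => ((delta1 F)ᵀ * delta1 F) e' e) = fun e' => f e'.1 :=
    funext fun e' => gram_delta1_apply e' e
  calc ((delta1 F)ᵀ * delta1 F * ((delta1 F)ᵀ * delta1 F)) e e
      = (((delta1 F)ᵀ * delta1 F) *ᵥ fun e' => ((delta1 F)ᵀ * delta1 F) e' e) e := rfl
    _ = upLaplacian F f e := by rw [hcol, gram_delta1_mulVec]
    _ = ∑ T ∈ F, ∑ T' ∈ F, triSign T e *
          (∑ e' ∈ T.powersetCard 2, triSign T e' * triSign T' e') * triSign T' e := by
        refine sum_congr rfl fun T _ => ?_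
        simp only [f, mul_sum, sum_mul, mul_assoc]
        exact sum_comm
    _ = ∑ T ∈ F, if e.1 ⊆ T then (codeg F e + 2 : ℝ) else 0 := by
        refine sum_congr rfl fun T hT => ?_
        split_ifs with heT
        · exact hF.sum_triSign_mul_sum_mul_triSign hT (card_eq_two_of_mem_edgesOf e.2) heT
        · simp [triSign_eq_zero fun h => heT h.1]
    _ = codeg F e * (codeg F e + 2) := by
        rw [← sum_filter, sum_const, nsmul_eq_mul, codeg]

theorem IsTriFam.lam_le_codeg_add_two (hF : IsTriFam F) (he : e ∈ edgesOf F) :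
    lam F ≤ codeg F e + 2 := by
  have hdiag := (posSemidef_mul_self_sub_lambdaMinPos_smul (posSemidef_gram_delta1 F)).diag_nonneg
    (i := ⟨e, he⟩)
  rw [Matrix.sub_apply, Matrix.smul_apply, smul_eq_mul, hF.gram_delta1_mul_self_apply_self,
    hF.gram_delta1_apply_self] at hdiag
  have hpos : (0 : ℝ) < codeg F e := Nat.cast_pos.2 (codeg_pos he)
  exact le_of_mul_le_mul_left (by rw [mul_comm _ (lam F)]; exact sub_nonneg.1 hdiag) hpos

end UpLaplacian

section CompleteFamily

variable {s e : Finset ℕ} {w : Finset ℕ → ℝ} {x y z : ℕ}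

/-- The sign of the ordered pair `(x, y)`: `1` if `x < y`, `-1` if `y < x` and `0` if `x = y`. -/
noncomputable def orient (x y : ℕ) : ℝ :=
  Real.sign ((y : ℝ) - x)

theorem orient_self (x : ℕ) : orient x x = 0 := by
  rw [orient, sub_self, Real.sign_zero]

theorem orient_swap (x y : ℕ) : orient y x = -orient x y := by
  rw [orient, orient, ← Real.sign_neg, neg_sub]

theorem orient_of_lt (h : x < y) : orient x y = 1 :=
  Real.sign_of_pos (sub_pos.2 (Nat.cast_lt.2 h))

theorem orient_of_gt (h : y < x) : orient x y = -1 := by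
  rw [orient_swap, orient_of_lt h]

theorem orient_mul_self (h : x ≠ y) : orient x y * orient x y = 1 := by
  rcases h.lt_or_gt with h | h
  · rw [orient_of_lt h, one_mul]
  · rw [orient_of_gt h, neg_mul_neg, one_mul]

theorem triSign_triple (hxy : x ≠ y) (hyz : y ≠ z) (hzx : z ≠ x) :
    triSign {x, y, z} {x, y} = orient x z * orient y z := by
  have hsdiff : ({x, y, z} : Finset ℕ) \ {x, y} = {z} := by grind
  have hmax : ({z} : Finset ℕ).max = ({x, y, z} : Finset ℕ).max ↔ x ≤ z ∧ y ≤ z := by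
    rw [max_insert, max_insert, max_singleton, ← sup_assoc, right_eq_sup, sup_le_iff,
      WithBot.coe_le_coe, WithBot.coe_le_coe]
  have hmin : ({z} : Finset ℕ).min = ({x, y, z} : Finset ℕ).min ↔ z ≤ x ∧ z ≤ y := by
    rw [min_insert, min_insert, min_singleton, ← inf_assoc, right_eq_inf, le_inf_iff,
      WithTop.coe_le_coe, WithTop.coe_le_coe]
  rw [triSign, if_pos ⟨by grind, card_pair hxy,
    card_eq_three.2 ⟨x, y, z, hxy, hzx.symm, hyz, rfl⟩⟩, hsdiff]
  simp only [hmax, hmin]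
  rcases hzx.lt_or_gt with hzx | hzx <;> rcases hyz.lt_or_gt with hyz | hyz <;>
    simp [orient_of_lt, orient_of_gt, hzx, hyz, hzx.le, hyz.le, hzx.not_ge, hyz.not_ge]

/-- The alternating function on ordered pairs extending a function `w` on edges, an edge being
oriented from its smaller to its larger vertex. -/
noncomputable def altExt (w : Finset ℕ → ℝ) (x y : ℕ) : ℝ :=
  orient x y * w {x, y}

theorem altExt_self (w : Finset ℕ → ℝ) (x : ℕ) : altExt w x x = 0 := by
  rw [altExt, orient_self, zero_mul]

theorem altExt_swap (w : Finset ℕ → ℝ) (x y : ℕ) : altExt w y x = -altExt w x y := by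
  rw [altExt, altExt, orient_swap, pair_comm, neg_mul]

/-- The coboundary of a function `g` on ordered pairs, evaluated on the oriented triangle
`(x, y, z)`. -/
def coboundary {α R : Type*} [Add R] (g : α → α → R) (x y z : α) : R :=
  g x y + g y z + g z x

-- This is `δ₂ δ₁ = 0` on the tetrahedron `x, y, z, u`, summed over `z`: the values of `g` on the
-- edges at `z` cancel in pairs.
theorem coboundary_sum_coboundary {α R : Type*} [CommRing R] {g : α → α → R}
    (hg : ∀ x y, g y x = -g x y) (s : Finset α) (x y u : α) :
    coboundary (fun x y => ∑ z ∈ s, coboundary g x y z) x y u = #s * coboundary g x y u := by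
  rw [coboundary, ← sum_add_distrib, ← sum_add_distrib, ← nsmul_eq_mul, ← sum_const]
  refine sum_congr rfl fun z _ => ?_
  simp only [coboundary]
  linear_combination hg y z + hg z x + hg u z

theorem sum_powersetCard_two_triple {α M : Type*} [DecidableEq α] [AddCommMonoid M] {x y z : α}
    (f : Finset α → M) (hxy : x ≠ y) (hyz : y ≠ z) (hzx : z ≠ x) :
    ∑ e ∈ ({x, y, z} : Finset α).powersetCard 2, f e = f {x, y} + f {y, z} + f {z, x} := by
  have h₁ : ({x, y} : Finset α) ≠ {y, z} := ne_of_mem_of_not_mem' (a := x) (by grind) (by grind)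
  have h₂ : ({x, y} : Finset α) ≠ {z, x} := ne_of_mem_of_not_mem' (a := y) (by grind) (by grind)
  have h₃ : ({y, z} : Finset α) ≠ {z, x} := ne_of_mem_of_not_mem' (a := y) (by grind) (by grind)
  have hpairs : {{x, y}, {y, z}, {z, x}} = ({x, y, z} : Finset α).powersetCard 2 := by
    refine eq_of_subset_of_card_le ?_ ?_
    · simp only [insert_subset_iff, singleton_subset_iff, mem_powersetCard, card_pair hxy,
        card_pair hyz, card_pair hzx]
      grind
    · rw [card_powersetCard, card_eq_three.2 ⟨x, y, z, hxy, hzx.symm, hyz, rfl⟩,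
        card_eq_three.2 ⟨_, _, _, h₁, h₂, h₃, rfl⟩]
      rfl
  rw [← hpairs, sum_insert (by grind), sum_insert (by grind), sum_singleton, add_assoc]

theorem filter_subset_powersetCard_succ {α : Type*} [DecidableEq α] {s e : Finset α} (h : e ⊆ s) :
    {T ∈ s.powersetCard (#e + 1) | e ⊆ T} = (s \ e).image fun z => insert z e := by
  ext T
  simp only [mem_filter, mem_powersetCard, mem_image, mem_sdiff]
  constructor
  · rintro ⟨⟨hTs, hT⟩, heT⟩
    obtain ⟨z, hz, rfl⟩ := exists_eq_insert_iff.2 ⟨heT, hT.symm⟩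
    exact ⟨z, ⟨hTs (mem_insert_self z e), hz⟩, rfl⟩
  · rintro ⟨z, ⟨hzs, hz⟩, rfl⟩
    exact ⟨⟨insert_subset hzs h, card_insert_of_notMem hz⟩, subset_insert z e⟩

theorem orient_mul_triSign_mul_sum (w : Finset ℕ → ℝ) (hxy : x ≠ y) (hyz : y ≠ z) (hzx : z ≠ x) :
    orient x y * (triSign {x, y, z} {x, y} *
      ∑ e ∈ ({x, y, z} : Finset ℕ).powersetCard 2, triSign {x, y, z} e * w e) =
      coboundary (altExt w) x y z := by
  have hrot {a b c : ℕ} : ({a, b, c} : Finset ℕ) = {b, c, a} := by grind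
  have hyz' : triSign {x, y, z} {y, z} = orient y x * orient z x := by
    rw [hrot, triSign_triple hyz hzx hxy]
  have hzx' : triSign {x, y, z} {z, x} = orient z y * orient x y := by
    rw [← hrot, triSign_triple hzx hxy hyz]
  rw [sum_powersetCard_two_triple _ hxy hyz hzx, triSign_triple hxy hyz hzx, hyz', hzx',
    orient_swap x y, orient_swap y z, orient_swap z x]
  simp only [coboundary, altExt]
  have hp := orient_mul_self hxy
  have hq := orient_mul_self hyz
  have hr := orient_mul_self hzx
  grind

theorem altExt_upLaplacian_powersetCard_three (w : Finset ℕ → ℝ) (hx : x ∈ s) (hy : y ∈ s) :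
    altExt (upLaplacian (s.powersetCard 3) w) x y = ∑ z ∈ s, coboundary (altExt w) x y z := by
  rcases eq_or_ne x y with rfl | hxy
  · simp [altExt_self, coboundary, altExt_swap w x]
  have hsub : ({x, y} : Finset ℕ) ⊆ s := insert_subset hx (singleton_subset_iff.2 hy)
  set t : Finset ℕ → ℝ := fun T =>
    orient x y * (triSign T {x, y} * ∑ e ∈ T.powersetCard 2, triSign T e * w e)
  calc altExt (upLaplacian (s.powersetCard 3) w) x y
      = ∑ T ∈ s.powersetCard 3, t T := mul_sum _ _ _
    _ = ∑ T ∈ s.powersetCard (#{x, y} + 1) with {x, y} ⊆ T, t T := by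
        rw [card_pair hxy]
        refine (sum_filter_of_ne fun T _ h => by_contra fun hT => h ?_).symm
        simp [t, triSign_eq_zero fun h => hT h.1]
    _ = ∑ z ∈ s \ {x, y}, t (insert z {x, y}) := by
        rw [filter_subset_powersetCard_succ hsub, sum_image]
        exact (insert_inj_on {x, y}).mono fun z hz => (mem_sdiff.1 hz).2
    _ = ∑ z ∈ s \ {x, y}, coboundary (altExt w) x y z := by
        refine sum_congr rfl fun z hz => ?_
        obtain ⟨-, hz⟩ := mem_sdiff.1 hz
        have hset : insert z {x, y} = ({x, y, z} : Finset ℕ) := by grind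
        rw [hset]
        exact orient_mul_triSign_mul_sum w hxy (by grind) (by grind)
    _ = ∑ z ∈ s, coboundary (altExt w) x y z := by
        refine sum_subset sdiff_subset fun z hzs hz => ?_
        obtain rfl | rfl : z = x ∨ z = y := by grind
        · simp [coboundary, altExt_self, altExt_swap w z]
        · simp [coboundary, altExt_self, altExt_swap w x]

theorem altExt_upLaplacian_upLaplacian (w : Finset ℕ → ℝ) (hx : x ∈ s) (hy : y ∈ s) :
    altExt (upLaplacian (s.powersetCard 3) (upLaplacian (s.powersetCard 3) w)) x y =
      #s * altExt (upLaplacian (s.powersetCard 3) w) x y := by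
  have h {a b} (ha : a ∈ s) (hb : b ∈ s) := altExt_upLaplacian_powersetCard_three w ha hb
  rw [altExt_upLaplacian_powersetCard_three _ hx hy, h hx hy, mul_sum]
  refine sum_congr rfl fun u hu => ?_
  calc coboundary (altExt (upLaplacian (s.powersetCard 3) w)) x y u
      = coboundary (fun x y => ∑ z ∈ s, coboundary (altExt w) x y z) x y u := by
        rw [coboundary, h hx hy, h hy hu, h hu hx, coboundary]
    _ = #s * coboundary (altExt w) x y u := coboundary_sum_coboundary (altExt_swap w) s x y u

theorem upLaplacian_upLaplacian_powersetCard_three (w : Finset ℕ → ℝ)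
    (he : e ∈ edgesOf (s.powersetCard 3)) :
    upLaplacian (s.powersetCard 3) (upLaplacian (s.powersetCard 3) w) e =
      #s * upLaplacian (s.powersetCard 3) w e := by
  obtain ⟨T, hT, heT, he⟩ := mem_edgesOf.1 he
  obtain ⟨x, y, hxy, rfl⟩ := card_eq_two.1 he
  have hsub := heT.trans (mem_powersetCard.1 hT).1
  have h := altExt_upLaplacian_upLaplacian w (hsub (mem_insert_self x {y}))
    (hsub (mem_insert_of_mem (mem_singleton_self y)))
  have hne : orient x y ≠ 0 := left_ne_zero_of_mul_eq_one (orient_mul_self hxy)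
  refine mul_left_cancel₀ hne ?_
  rw [mul_left_comm]
  exact h

theorem gram_delta1_powersetCard_three_mul_self (s : Finset ℕ) :
    ((delta1 (s.powersetCard 3))ᵀ * delta1 (s.powersetCard 3)) *
      ((delta1 (s.powersetCard 3))ᵀ * delta1 (s.powersetCard 3)) =
      (#s : ℝ) • ((delta1 (s.powersetCard 3))ᵀ * delta1 (s.powersetCard 3)) := by
  refine ext_of_mulVec_single fun i => ?_
  obtain ⟨w, hw⟩ : ∃ w : Finset ℕ → ℝ, Pi.single i 1 = fun e => w e.1 :=
    ⟨Pi.single i.1 1, funext fun e => by simp only [Pi.single_apply, Subtype.ext_iff]⟩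
  rw [hw, ← mulVec_mulVec, smul_mulVec]
  simp only [gram_delta1_mulVec]
  ext e
  exact upLaplacian_upLaplacian_powersetCard_three w e.2

theorem isTriFam_powersetCard_three (hs : 3 ≤ #s) : IsTriFam (s.powersetCard 3) :=
  ⟨powersetCard_nonempty.2 hs, fun _ hT => (mem_powersetCard.1 hT).2⟩

theorem IsTriFam.gram_delta1_ne_zero {F : Finset (Finset ℕ)} (hF : IsTriFam F) :
    (delta1 F)ᵀ * delta1 F ≠ 0 := by
  obtain ⟨e, he⟩ := hF.edgesOf_nonempty
  intro h
  have h0 := hF.gram_delta1_apply_self ⟨e, he⟩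
  rw [h, Matrix.zero_apply] at h0
  exact (codeg_pos he).ne (Nat.cast_injective (R := ℝ) (Nat.cast_zero.trans h0))

theorem lam_powersetCard_three (hs : 3 ≤ #s) : lam (s.powersetCard 3) = #s :=
  lambdaMinPos_eq_of_mul_self_eq_smul (Nat.cast_pos.2 (by lia))
    (isTriFam_powersetCard_three hs).gram_delta1_ne_zero
    (gram_delta1_powersetCard_three_mul_self s)

end CompleteFamily
section Phi

variable {F : Finset (Finset ℕ)} {a : ℝ} {t s k n : ℕ}

theorem IsTriFam.lam_le_card_add_two (hF : IsTriFam F) : lam F ≤ #F + 2 := by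
  obtain ⟨e, he⟩ := hF.edgesOf_nonempty
  calc lam F ≤ codeg F e + 2 := hF.lam_le_codeg_add_two he
    _ ≤ #F + 2 := by gcongr; exact card_filter_le F _

theorem IsTriFam.lam_le_phi (hF : IsTriFam F) : lam F ≤ phi #F := by
  refine le_csSup ⟨#F + 2, ?_⟩ ⟨F, hF, rfl, rfl⟩
  rintro _ ⟨G, hG, hcard, rfl⟩
  exact hcard ▸ hG.lam_le_card_add_two

theorem exists_lt_lam_of_lt_phi (ha : 0 ≤ a) (h : a < phi t) :
    ∃ F, IsTriFam F ∧ #F = t ∧ a < lam F := by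
  have hne : {r : ℝ | ∃ F, IsTriFam F ∧ #F = t ∧ lam F = r}.Nonempty := by
    by_contra! hempty
    rw [phi, hempty, Real.sSup_empty] at h
    exact h.not_ge ha
  obtain ⟨_, ⟨F, hF, hcard, rfl⟩, hlt⟩ := exists_lt_of_lt_csSup hne h
  exact ⟨F, hF, hcard, hlt⟩

theorem succ_mul_le_six_mul_of_lt_phi (hs : 1 ≤ s)
    (h : (k : ℝ) + 1 < phi ((k + 2).choose 3 + s)) : (k + 1) * k ≤ 6 * s := by
  obtain ⟨F, hF, hcard, hlam⟩ := exists_lt_lam_of_lt_phi (by positivity) h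
  have hcodeg : ∀ e ∈ edgesOf F, k ≤ codeg F e := fun e he => by
    have hlt : (k : ℝ) + 1 < codeg F e + 2 := hlam.trans_le (hF.lam_le_codeg_add_two he)
    norm_cast at hlt
    lia
  have := hF.six_mul_choose_three_add_le hcodeg (by lia)
  lia

theorem choose_three_succ (n : ℕ) : (n + 1).choose 3 = n.choose 3 + n.choose 2 := by
  rw [Nat.choose_succ_succ', add_comm]

theorem sub_one_lt_phi_choose_three_add_choose_two (hn : 2 ≤ n) :
    (n : ℝ) - 1 < phi (n.choose 3 + n.choose 2) := by
  have hcard : #(range (n + 1)) = n + 1 := card_range (n + 1)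
  have hs : 3 ≤ #(range (n + 1)) := by lia
  calc (n : ℝ) - 1 < (n + 1 : ℕ) := by push_cast; linarith
    _ = lam ((range (n + 1)).powersetCard 3) := by rw [lam_powersetCard_three hs, hcard]
    _ ≤ phi #((range (n + 1)).powersetCard 3) := (isTriFam_powersetCard_three hs).lam_le_phi
    _ = phi (n.choose 3 + n.choose 2) := by rw [card_powersetCard, hcard, choose_three_succ]

theorem Hfun_le_choose_two (hn : 2 ≤ n) : Hfun n ≤ n.choose 2 :=
  Nat.sInf_le (m := n.choose 2) ⟨Nat.choose_pos hn, sub_one_lt_phi_choose_three_add_choose_two hn⟩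

theorem Hfun_spec (hn : 2 ≤ n) :
    1 ≤ Hfun n ∧ (n : ℝ) - 1 < phi (n.choose 3 + Hfun n) :=
  Nat.sInf_mem (s := {s : ℕ | 1 ≤ s ∧ (n : ℝ) - 1 < phi (n.choose 3 + s)})
    ⟨n.choose 2, Nat.choose_pos hn, sub_one_lt_phi_choose_three_add_choose_two hn⟩

theorem sub_one_mul_sub_two_le_six_mul_Hfun (hn : 2 ≤ n) :
    ((n : ℝ) - 1) * (n - 2) ≤ 6 * Hfun n := by
  obtain ⟨hpos, hlt⟩ := Hfun_spec hn
  obtain ⟨k, rfl⟩ := Nat.exists_eq_add_of_le' hn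
  have hsub : (k : ℝ) + 1 = (k + 2 : ℕ) - 1 := by push_cast; ring
  have hk : (k + 1) * k ≤ 6 * Hfun (k + 2) :=
    succ_mul_le_six_mul_of_lt_phi hpos (hsub.trans_lt hlt)
  calc ((k + 2 : ℕ) - 1 : ℝ) * ((k + 2 : ℕ) - 2) = ((k + 1) * k : ℕ) := by push_cast; ring
    _ ≤ (6 * Hfun (k + 2) : ℕ) := Nat.cast_le.2 hk
    _ = 6 * Hfun (k + 2) := by push_cast; rfl

end Phi

/-- For all sufficiently large `n`, `n²/6 - 5n/(2√3) + 3 < H(n) ≤ C(n,2)`; in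
particular `H(n) = Θ(C(n+1,3) - C(n,3)) = Θ(n²)`. -/
theorem stmt14 :
    (∃ N : ℕ, ∀ n : ℕ, N ≤ n →
      (n : ℝ) ^ 2 / 6 - 5 * (n : ℝ) / (2 * Real.sqrt 3) + 3 < (Hfun n : ℝ) ∧
      Hfun n ≤ n.choose 2) ∧
    (∃ c₁ c₂ : ℝ, 0 < c₁ ∧ 0 < c₂ ∧ ∃ N : ℕ, ∀ n : ℕ, N ≤ n →
      c₁ * (((n + 1).choose 3 - n.choose 3 : ℕ) : ℝ) ≤ (Hfun n : ℝ) ∧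
      (Hfun n : ℝ) ≤ c₂ * (((n + 1).choose 3 - n.choose 3 : ℕ) : ℝ)) ∧
    (∃ c₁ c₂ : ℝ, 0 < c₁ ∧ 0 < c₂ ∧ ∃ N : ℕ, ∀ n : ℕ, N ≤ n →
      c₁ * (n : ℝ) ^ 2 ≤ (Hfun n : ℝ) ∧ (Hfun n : ℝ) ≤ c₂ * (n : ℝ) ^ 2) := by
  have hn {n : ℕ} (h : 4 ≤ n) : (4 : ℝ) ≤ n := by exact_mod_cast h
  have hlower {n : ℕ} (h : 4 ≤ n) := sub_one_mul_sub_two_le_six_mul_Hfun (n := n) (by lia)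
  have hupper {n : ℕ} (h : 4 ≤ n) : (Hfun n : ℝ) ≤ n.choose 2 :=
    Nat.cast_le.2 (Hfun_le_choose_two (by lia))
  have hchoose (n : ℕ) : (n.choose 2 : ℝ) = n * (n - 1) / 2 := Nat.cast_choose_two ℝ n
  have hsub (n : ℕ) : (n + 1).choose 3 - n.choose 3 = n.choose 2 := by
    rw [choose_three_succ, Nat.add_sub_cancel_left]
  refine ⟨⟨4, fun n h => ⟨?_, Hfun_le_choose_two (by lia)⟩⟩,
    ⟨1 / 6, 1, by norm_num, by norm_num, 4, fun n h => ?_⟩,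
    ⟨1 / 24, 1, by norm_num, by norm_num, 4, fun n h => ?_⟩⟩
  · have hsqrt : √3 ≤ 2 := Real.sqrt_le_iff.2 (by norm_num)
    have hlin : 5 * (n : ℝ) / (2 * 2) ≤ 5 * n / (2 * √3) := by gcongr
    linarith [hn h, hlower h]
  · rw [hsub]
    exact ⟨by nlinarith [hn h, hlower h, hchoose n], by linarith [hupper h]⟩
  · constructor <;> nlinarith [hn h, hlower h, hupper h, hchoose n]
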